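/- (Minimum length of informative experiments.) Let the data (u_{[0,t−1]}, y_{[0,t−1]}) with u_{[0,t−1]} ≠ 0 be generated by a minimal true system with n_true states and lag ℓ_true, and let L, N satisfy ℓ_true ≤ L and n_true ≤ N. If the data are informative for system identification, then ℓ_min,t = ℓ_true, n_min,t = n_true, and t ≥ T := L^a + (L^a+1)m + n_true, where L^a := min(L, N − n_true + ℓ_true). In particular, every informative experiment contains at least T samples. -/

import Mathlib

/-!
Let `n`, `ℓ` be the state dimension and lag of the true system and `K = L^a = min(L, N - n + ℓ)`,
so that `ℓ ≤ K ≤ L` and `K - ℓ ≤ N - n`. The heart of the matter is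
`independent_of_informative`: informative data satisfy no nonzero relation
`ξ x(s) + ∑ j ≤ K, η j (u (s + j)) = 0` valid on all windows `[s, s + K] ⊆ [0, t - 1]`, where `x` is
the true state trajectory.

Suppose there is such a relation. Add to the true system a scalar input channel `e` whose effect
reaches the output only after `ℓ` steps (`exists_initial_stage`), and delay it further by `K - ℓ`
one-state filters (`Stage.step`). The result has `n + K - ℓ ≤ N` states and is observable from `K`
output samples. Now close the loop `e = ε (ξ x + ∑ j ≤ K, η j σ^j u)`, absorbing the future inputs
`σ^j u` into the state. Along the data `e = 0` except during the last `K` steps, and these cannot be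
seen at the output, so the closed loop explains the data (`Stage.cl_explains`). The blocks `C A^i`
with `i < K` are unchanged, so it is observable with lag at most `K ≤ L`. For suitable `ε ≠ 0` it is
controllable by the Hautus test (`Stage.exists_gain`): the gains and filter poles to be avoided come
from the solutions `(μ, w)` of `w A + ξ = μ w`, `w B + ∑ j, μ^j η j = 0`, of which there are
finitely many (`exceptional_finite`). If `K > ℓ`, this minimal system has more than `n` states,
against part (i) of informativity. If `K = ℓ`, it is isomorphic to the true system by part (ii);
the isomorphism preserves the first `ℓ` observability blocks, hence is the identity, which makes the
relation trivial (`Stage.relation_trivial`).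

Independence gives everything else. The `n + (K + 1) m` independent rows of the stacked
state/input Hankel matrix need at least as many columns, of which there are `t - K` (`length_le`).
Any explaining system predicts the same outputs as the true one over a window, so comparing the two
observability maps modulo the inputs shows that it has at least `n` states (`states_le`) and lag at
least `ℓ` (`lag_le`).
-/

open Matrix

/-- The Hankel matrix with `rows` block rows and `cols` columns built from the
vector sequence `f` (starting at time `0`): the block entry in block row `r` and
column `c` is `f (r + c)`.  Thus `H_k(f_{[0,t-1]}) = hankel f (k+1) (t-k)`. -/
def hankel {d : ℕ} (f : ℕ → Fin d → ℝ) (rows cols : ℕ) :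
    Matrix (Fin rows × Fin d) (Fin cols) ℝ :=
  Matrix.of fun r c => f ((r.1 : ℕ) + (c : ℕ)) r.2

/-- `u_{[0,t-1]}` is persistently exciting of order `k+1`, i.e. the Hankel
matrix `H_k(u_{[0,t-1]})` (with `k+1` block rows) has full row rank. -/
def PersistentlyExciting {m : ℕ} (u : ℕ → Fin m → ℝ) (t k : ℕ) : Prop :=
  (hankel u (k + 1) (t - k)).rank = (k + 1) * m

/-- The Hankel matrix `H_{k,t}`: `H_k(y_{[0,t-1]})` stacked on top of
`H_k(u_{[0,t-1]})`. -/
def Hkt {m p : ℕ} (u : ℕ → Fin m → ℝ) (y : ℕ → Fin p → ℝ) (k t : ℕ) :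
    Matrix ((Fin (k + 1) × Fin p) ⊕ (Fin (k + 1) × Fin m)) (Fin (t - k)) ℝ :=
  Matrix.fromRows (hankel y (k + 1) (t - k)) (hankel u (k + 1) (t - k))

/-- The matrix `G_{k,t}`: `H_{k-1}(y_{[0,t-2]})` (which has `k` block rows and
`t-k` columns) stacked on top of `H_k(u_{[0,t-1]})`. -/
def Gkt {m p : ℕ} (u : ℕ → Fin m → ℝ) (y : ℕ → Fin p → ℝ) (k t : ℕ) :
    Matrix ((Fin k × Fin p) ⊕ (Fin (k + 1) × Fin m)) (Fin (t - k)) ℝ :=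
  Matrix.fromRows (hankel y k (t - k)) (hankel u (k + 1) (t - k))

/-- `δ_{k,t} = rank H_{k,t} - rank G_{k,t}`. -/
noncomputable def deltaKT {m p : ℕ} (u : ℕ → Fin m → ℝ) (y : ℕ → Fin p → ℝ) (k t : ℕ) : ℕ :=
  (Hkt u y k t).rank - (Gkt u y k t).rank

/-- `q_t`: the smallest `k ∈ [0, t-1]` with `δ_{k,t} = 0`. -/
noncomputable def qT {m p : ℕ} (u : ℕ → Fin m → ℝ) (y : ℕ → Fin p → ℝ) (t : ℕ) : ℕ :=
  sInf {k | k ≤ t - 1 ∧ deltaKT u y k t = 0}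

/-- A discrete-time linear system `(A, B, C, D)` with `m` inputs, `p` outputs
and `n` states. -/
structure LinSys (m p : ℕ) where
  n : ℕ
  A : Matrix (Fin n) (Fin n) ℝ
  B : Matrix (Fin n) (Fin m) ℝ
  C : Matrix (Fin p) (Fin n) ℝ
  D : Matrix (Fin p) (Fin m) ℝ

/-- `obsMat sys k` is the observability matrix `Ω_{k-1}` with `k` block rows,
stacking `C, CA, ..., CA^(k-1)`. -/
def obsMat {m p : ℕ} (sys : LinSys m p) (k : ℕ) :
    Matrix (Fin k × Fin p) (Fin sys.n) ℝ :=
  Matrix.of fun r j => (sys.C * sys.A ^ (r.1 : ℕ)) r.2 j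

/-- The lag `ℓ(C,A)`: the smallest `k ≥ 0` with `rank Ω_k = rank Ω_{k-1}`. -/
noncomputable def lag {m p : ℕ} (sys : LinSys m p) : ℕ :=
  sInf {k | (obsMat sys (k + 1)).rank = (obsMat sys k).rank}

/-- The controllability matrix with `k` blocks `[B, AB, ..., A^(k-1)B]`. -/
def ctrlMat {m p : ℕ} (sys : LinSys m p) (k : ℕ) :
    Matrix (Fin sys.n) (Fin k × Fin m) ℝ :=
  Matrix.of fun i c => (sys.A ^ (c.1 : ℕ) * sys.B) i c.2

def Observable {m p : ℕ} (sys : LinSys m p) : Prop :=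
  (obsMat sys sys.n).rank = sys.n

def Controllable {m p : ℕ} (sys : LinSys m p) : Prop :=
  (ctrlMat sys sys.n).rank = sys.n

def MinimalSys {m p : ℕ} (sys : LinSys m p) : Prop :=
  Controllable sys ∧ Observable sys

/-- The system explains the data `(u_{[0,t-1]}, y_{[0,t-1]})` with the
compatible state sequence `x`. -/
def ExplainsWith {m p : ℕ} (sys : LinSys m p) (t : ℕ) (u : ℕ → Fin m → ℝ)
    (y : ℕ → Fin p → ℝ) (x : ℕ → Fin sys.n → ℝ) : Prop :=
  ∀ s < t, x (s + 1) = sys.A.mulVec (x s) + sys.B.mulVec (u s) ∧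
    y s = sys.C.mulVec (x s) + sys.D.mulVec (u s)

/-- The system explains (equivalently, generates) the data
`(u_{[0,t-1]}, y_{[0,t-1]})`. -/
def Explains {m p : ℕ} (sys : LinSys m p) (t : ℕ) (u : ℕ → Fin m → ℝ)
    (y : ℕ → Fin p → ℝ) : Prop :=
  ∃ x : ℕ → Fin sys.n → ℝ, ExplainsWith sys t u y x

/-- `ℰ_t`, the set of systems explaining the data. -/
def ExplSet {m p : ℕ} (t : ℕ) (u : ℕ → Fin m → ℝ) (y : ℕ → Fin p → ℝ) :
    Set (LinSys m p) :=
  {sys | Explains sys t u y}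

/-- `ℓ_min,t`: the smallest lag among explaining systems. -/
noncomputable def lMin {m p : ℕ} (t : ℕ) (u : ℕ → Fin m → ℝ) (y : ℕ → Fin p → ℝ) : ℕ :=
  sInf {ℓ | ∃ sys : LinSys m p, Explains sys t u y ∧ lag sys = ℓ}

/-- `n_min,t`: the smallest state dimension among explaining systems. -/
noncomputable def nMin {m p : ℕ} (t : ℕ) (u : ℕ → Fin m → ℝ) (y : ℕ → Fin p → ℝ) : ℕ :=
  sInf {n | ∃ sys : LinSys m p, Explains sys t u y ∧ sys.n = n}

/-- Two systems are isomorphic: `D₁ = D₂` and there is an invertible state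
transformation `S` with `S A₁ = A₂ S`, `S B₁ = B₂`, `C₁ = C₂ S`. -/
def Isomorphic {m p : ℕ} (s1 s2 : LinSys m p) : Prop :=
  s1.D = s2.D ∧ ∃ (S : Matrix (Fin s2.n) (Fin s1.n) ℝ)
    (S' : Matrix (Fin s1.n) (Fin s2.n) ℝ),
    S * S' = 1 ∧ S' * S = 1 ∧ S * s1.A = s2.A * S ∧ S * s1.B = s2.B ∧
    s1.C = s2.C * S

/-- `M`, the set of minimal systems. -/
def Mset (m p : ℕ) : Set (LinSys m p) := {sys | MinimalSys sys}

/-- `S_{L,N}`, the set of systems with lag at most `L` and at most `N` states. -/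
def SLN (m p L N : ℕ) : Set (LinSys m p) := {sys | lag sys ≤ L ∧ sys.n ≤ N}

/-- The data `(u_{[0,t-1]}, y_{[0,t-1]})` are informative for system
identification (with prior bounds `L`, `N`, and true state dimension `nTrue`). -/
def Informative {m p : ℕ} (t : ℕ) (u : ℕ → Fin m → ℝ) (y : ℕ → Fin p → ℝ)
    (nTrue L N : ℕ) : Prop :=
  (ExplSet t u y ∩ Mset m p ∩ SLN m p L N =
      {sys ∈ ExplSet t u y | sys.n = nTrue} ∩ Mset m p ∩ SLN m p L N) ∧
  ∀ s1 ∈ ExplSet t u y ∩ Mset m p ∩ SLN m p L N,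
    ∀ s2 ∈ ExplSet t u y ∩ Mset m p ∩ SLN m p L N, Isomorphic s1 s2

/-! ### Rank conditions and the lag -/

section StateSpace

variable {m p : ℕ}

lemma obsMat_mulVec_eq_zero_iff (sys : LinSys m p) (k : ℕ) (z : Fin sys.n → ℝ) :
    obsMat sys k *ᵥ z = 0 ↔
      ∀ i < k, sys.C.toLin' ((sys.A.toLin' ^ i) z) = 0 := by
  have key : ∀ r : Fin k × Fin p,
      (obsMat sys k *ᵥ z) r = (sys.C.toLin' ((sys.A.toLin' ^ (r.1 : ℕ)) z)) r.2 := by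
    intro r
    rw [← Matrix.toLin'_pow, ← LinearMap.comp_apply, ← Matrix.toLin'_mul, Matrix.toLin'_apply]
    rfl
  constructor
  · intro h i hi
    ext q
    have := congrFun h (⟨i, hi⟩, q)
    rw [key] at this
    simpa using this
  · intro h
    ext r
    rw [key, h _ r.1.2]
    rfl

lemma rank_eq_iff_of_ker_le {α β : Type} [Fintype α] [Fintype β] {n : ℕ}
    (M₁ : Matrix α (Fin n) ℝ) (M₂ : Matrix β (Fin n) ℝ)
    (h : ∀ z, M₁ *ᵥ z = 0 → M₂ *ᵥ z = 0) :
    M₁.rank = M₂.rank ↔ ∀ z, M₂ *ᵥ z = 0 → M₁ *ᵥ z = 0 := by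
  have e₁ := LinearMap.finrank_range_add_finrank_ker M₁.mulVecLin
  have e₂ := LinearMap.finrank_range_add_finrank_ker M₂.mulVecLin
  have hle : LinearMap.ker M₁.mulVecLin ≤ LinearMap.ker M₂.mulVecLin := by
    intro z hz
    simpa using h z (by simpa using hz)
  constructor
  · intro hr z hz
    have := Submodule.eq_of_le_of_finrank_eq hle (by
      unfold Matrix.rank at hr; omega)
    have hz' : z ∈ LinearMap.ker M₂.mulVecLin := by simpa using hz
    rw [← this] at hz'
    simpa using hz'
  · intro hk
    have : LinearMap.ker M₁.mulVecLin = LinearMap.ker M₂.mulVecLin :=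
      le_antisymm hle (fun z hz => by simpa using hk z (by simpa using hz))
    rw [this] at e₁
    unfold Matrix.rank
    omega

lemma rank_eq_width_iff {α : Type} [Fintype α] {n : ℕ} (M : Matrix α (Fin n) ℝ) :
    M.rank = n ↔ ∀ z, M *ᵥ z = 0 → z = 0 := by
  have := rank_eq_iff_of_ker_le (1 : Matrix (Fin n) (Fin n) ℝ) M (by
    intro z hz
    rw [Matrix.one_mulVec] at hz
    simp [hz])
  simpa [Matrix.rank_one, eq_comm] using this

lemma obs_rank_succ_eq_iff (sys : LinSys m p) (k : ℕ) :
    (obsMat sys (k + 1)).rank = (obsMat sys k).rank ↔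
      ∀ z, (∀ i < k, sys.C.toLin' ((sys.A.toLin' ^ i) z) = 0) →
        sys.C.toLin' ((sys.A.toLin' ^ k) z) = 0 := by
  rw [rank_eq_iff_of_ker_le]
  · simp only [obsMat_mulVec_eq_zero_iff]
    constructor
    · intro h z hz
      exact h z hz k (Nat.lt_succ_self k)
    · intro h z hz i hi
      rcases Nat.lt_succ_iff_lt_or_eq.mp hi with h' | rfl
      · exact hz i h'
      · exact h z hz
  · simp only [obsMat_mulVec_eq_zero_iff]
    intro z hz i hi
    exact hz i (by omega)

/-- The lag is attained: the ranks of the observability matrices are nondecreasing in the number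
of blocks and bounded by the state dimension, so they cannot increase forever. -/
lemma lag_spec (sys : LinSys m p) :
    (obsMat sys (lag sys + 1)).rank = (obsMat sys (lag sys)).rank := by
  refine Nat.sInf_mem (s := {k | (obsMat sys (k + 1)).rank = (obsMat sys k).rank}) ?_
  by_contra hne
  rw [Set.not_nonempty_iff_eq_empty] at hne
  have hlt : ∀ k, (obsMat sys k).rank < (obsMat sys (k + 1)).rank := by
    intro k
    refine lt_of_le_of_ne ?_ ?_
    · have e₁ := LinearMap.finrank_range_add_finrank_ker (obsMat sys k).mulVecLin
      have e₂ := LinearMap.finrank_range_add_finrank_ker (obsMat sys (k + 1)).mulVecLin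
      have : LinearMap.ker (obsMat sys (k + 1)).mulVecLin ≤
          LinearMap.ker (obsMat sys k).mulVecLin := by
        intro z hz
        have hz' : obsMat sys (k + 1) *ᵥ z = 0 := by simpa using hz
        rw [obsMat_mulVec_eq_zero_iff] at hz'
        have : obsMat sys k *ᵥ z = 0 :=
          (obsMat_mulVec_eq_zero_iff _ _ _).2 fun i hi => hz' i (by omega)
        simpa using this
      have := Submodule.finrank_mono this
      unfold Matrix.rank
      omega
    · intro h
      have : k ∈ {k | (obsMat sys (k + 1)).rank = (obsMat sys k).rank} := h.symm
      rw [hne] at this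
      exact this
  have hge : ∀ k, k ≤ (obsMat sys k).rank := by
    intro k
    induction k with
    | zero => omega
    | succ k ih => have := hlt k; omega
  have h1 := hge (sys.n + 1)
  have h2 := (obsMat sys (sys.n + 1)).rank_le_card_width
  rw [Fintype.card_fin] at h2
  omega

/-- If `CA^k` vanishes on `ker Ω_{k-1}`, then so do all `CA^i`. -/
lemma obs_stationary {X Y : Type} [AddCommGroup X] [Module ℝ X] [AddCommGroup Y] [Module ℝ Y]
    (A : X →ₗ[ℝ] X) (C : X →ₗ[ℝ] Y) (k : ℕ)
    (h : ∀ z, (∀ i < k, C ((A ^ i) z) = 0) → C ((A ^ k) z) = 0) (i : ℕ) :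
    ∀ z, (∀ j < k, C ((A ^ j) z) = 0) → C ((A ^ i) z) = 0 := by
  induction i with
  | zero =>
    intro z hz
    rcases Nat.eq_zero_or_pos k with rfl | hk
    · exact h z hz
    · exact hz 0 hk
  | succ i ih =>
    intro z hz
    rw [pow_succ, Module.End.mul_apply]
    refine ih (A z) fun j hj => ?_
    rw [← Module.End.mul_apply, ← pow_succ]
    rcases Nat.lt_or_ge (j + 1) k with h' | h'
    · exact hz _ h'
    · obtain rfl : j + 1 = k := by omega
      exact h z hz

lemma observable_iff (sys : LinSys m p) :
    Observable sys ↔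
      ∀ z, (∀ i < sys.n, sys.C.toLin' ((sys.A.toLin' ^ i) z) = 0) → z = 0 := by
  unfold Observable
  rw [rank_eq_width_iff]
  simp only [obsMat_mulVec_eq_zero_iff]

lemma obs_at_lag (sys : LinSys m p) (ho : Observable sys) (z : Fin sys.n → ℝ)
    (hz : ∀ i < lag sys, sys.C.toLin' ((sys.A.toLin' ^ i) z) = 0) : z = 0 :=
  (observable_iff sys).1 ho z fun i _ =>
    obs_stationary _ _ _ ((obs_rank_succ_eq_iff sys _).1 (lag_spec sys)) i z hz

lemma exists_ker_below_lag (sys : LinSys m p) (k : ℕ) (hk : lag sys = k + 1) :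
    ∃ z, (∀ i < k, sys.C.toLin' ((sys.A.toLin' ^ i) z) = 0) ∧
      sys.C.toLin' ((sys.A.toLin' ^ k) z) ≠ 0 := by
  by_contra hcon
  push Not at hcon
  have : lag sys ≤ k := Nat.sInf_le ((obs_rank_succ_eq_iff sys k).2 hcon)
  omega

/-- Cayley–Hamilton: a linear map killing `A^i` for all `i < n` kills every power of `A`. -/
lemma linear_pow_eq_zero {n : ℕ} {V : Type} [AddCommGroup V] [Module ℝ V]
    (A : Matrix (Fin n) (Fin n) ℝ) (f : Matrix (Fin n) (Fin n) ℝ →ₗ[ℝ] V)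
    (h : ∀ i < n, f (A ^ i) = 0) (i : ℕ) : f (A ^ i) = 0 := by
  rw [Matrix.pow_eq_aeval_mod_charpoly]
  rcases Nat.eq_zero_or_pos n with rfl | hn
  · rw [Subsingleton.elim (Polynomial.aeval A _) 0, map_zero]
  have : Nonempty (Fin n) := ⟨⟨0, hn⟩⟩
  rw [Polynomial.aeval_eq_sum_range' (n := n), map_sum]
  · refine Finset.sum_eq_zero fun j hj => ?_
    rw [map_smul, h j (Finset.mem_range.1 hj), smul_zero]
  · have hdeg := Matrix.charpoly_natDegree_eq_dim A
    rw [Fintype.card_fin] at hdeg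
    have := Polynomial.natDegree_modByMonic_lt (Polynomial.X ^ i) (Matrix.charpoly_monic A)
      (fun h1 => by rw [h1, Polynomial.natDegree_one] at hdeg; omega)
    omega

lemma observable_of_obs (sys : LinSys m p) (k : ℕ)
    (h : ∀ z, (∀ i < k, sys.C.toLin' ((sys.A.toLin' ^ i) z) = 0) → z = 0) :
    Observable sys := by
  rw [observable_iff]
  intro z hz
  refine h z fun i _ => ?_
  let f : Matrix (Fin sys.n) (Fin sys.n) ℝ →ₗ[ℝ] (Fin p → ℝ) :=
    sys.C.toLin' ∘ₗ (LinearMap.applyₗ z) ∘ₗ (Matrix.toLin'.toLinearMap)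
  have hf : ∀ i, f (sys.A ^ i) = sys.C.toLin' ((sys.A.toLin' ^ i) z) := by
    intro i
    rw [← Matrix.toLin'_pow]
    rfl
  rw [← hf]
  exact linear_pow_eq_zero sys.A f (fun j hj => by rw [hf]; exact hz j hj) i

lemma vecMul_ctrlMat_eq_zero_iff (sys : LinSys m p) (k : ℕ) (w : Fin sys.n → ℝ) :
    w ᵥ* ctrlMat sys k = 0 ↔
      ∀ i < k, ∀ a, w ⬝ᵥ ((sys.A.toLin' ^ i) (sys.B.toLin' a)) = 0 := by
  have key : ∀ i a, w ⬝ᵥ ((sys.A.toLin' ^ i) (sys.B.toLin' a)) =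
      (w ᵥ* (sys.A ^ i * sys.B)) ⬝ᵥ a := by
    intro i a
    rw [← Matrix.toLin'_pow, ← LinearMap.comp_apply, ← Matrix.toLin'_mul, Matrix.toLin'_apply,
      Matrix.dotProduct_mulVec]
  simp only [key]
  constructor
  · intro h i hi a
    have : w ᵥ* (sys.A ^ i * sys.B) = 0 := by
      ext c
      exact congrFun h (⟨i, hi⟩, c)
    rw [this, zero_dotProduct]
  · intro h
    ext r
    have := h r.1 r.1.2 (Pi.single r.2 1)
    rw [dotProduct_single_one] at this
    exact this

lemma controllable_iff (sys : LinSys m p) :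
    Controllable sys ↔ ∀ w : Fin sys.n → ℝ,
      (∀ i a, w ⬝ᵥ ((sys.A.toLin' ^ i) (sys.B.toLin' a)) = 0) → w = 0 := by
  unfold Controllable
  rw [← Matrix.rank_transpose, rank_eq_width_iff]
  simp only [Matrix.mulVec_transpose, vecMul_ctrlMat_eq_zero_iff]
  constructor
  · intro h w hw
    exact h w fun i _ => hw i
  · intro h w hw
    refine h w fun i a => ?_
    let f : Matrix (Fin sys.n) (Fin sys.n) ℝ →ₗ[ℝ] ℝ :=
      (dotProductBilin ℝ ℝ w) ∘ₗ (LinearMap.applyₗ (sys.B.toLin' a)) ∘ₗ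
        (Matrix.toLin'.toLinearMap)
    have hf : ∀ i, f (sys.A ^ i) = w ⬝ᵥ ((sys.A.toLin' ^ i) (sys.B.toLin' a)) := by
      intro i
      rw [← Matrix.toLin'_pow]
      rfl
    rw [← hf]
    exact linear_pow_eq_zero sys.A f (fun j hj => by rw [hf]; exact hw j hj a) i

end StateSpace

/-! ### Coordinate-free realizations and the Hautus test -/

section Realization

variable {m p : ℕ} {X : Type} [AddCommGroup X] [Module ℝ X]

/-- `sys` is the coordinate representation, through `φ`, of the linear system `(A, B, C, D)` whose
state space is the abstract vector space `X`. -/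
structure Represents (sys : LinSys m p) (φ : X ≃ₗ[ℝ] (Fin sys.n → ℝ))
    (A : X →ₗ[ℝ] X) (B : (Fin m → ℝ) →ₗ[ℝ] X) (C : X →ₗ[ℝ] (Fin p → ℝ))
    (D : (Fin m → ℝ) →ₗ[ℝ] (Fin p → ℝ)) : Prop where
  hA : ∀ z, sys.A.toLin' (φ z) = φ (A z)
  hB : ∀ a, sys.B.toLin' a = φ (B a)
  hC : ∀ z, sys.C.toLin' (φ z) = C z
  hD : ∀ a, sys.D.toLin' a = D a

lemma exists_represents [FiniteDimensional ℝ X] (A : X →ₗ[ℝ] X) (B : (Fin m → ℝ) →ₗ[ℝ] X)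
    (C : X →ₗ[ℝ] (Fin p → ℝ)) (D : (Fin m → ℝ) →ₗ[ℝ] (Fin p → ℝ)) :
    ∃ (sys : LinSys m p) (φ : X ≃ₗ[ℝ] (Fin sys.n → ℝ)), Represents sys φ A B C D := by
  let φ : X ≃ₗ[ℝ] (Fin (Module.finrank ℝ X) → ℝ) := (Module.finBasis ℝ X).equivFun
  refine ⟨⟨Module.finrank ℝ X, LinearMap.toMatrix' (φ.toLinearMap ∘ₗ A ∘ₗ φ.symm.toLinearMap),
    LinearMap.toMatrix' (φ.toLinearMap ∘ₗ B), LinearMap.toMatrix' (C ∘ₗ φ.symm.toLinearMap),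
    LinearMap.toMatrix' D⟩, φ, ?_, ?_, ?_, ?_⟩
  · intro z
    simp only [Matrix.toLin'_toMatrix']
    simp
  · intro z
    simp only [Matrix.toLin'_toMatrix']
    simp
  · intro z
    simp only [Matrix.toLin'_toMatrix']
    simp
  · intro z
    simp only [Matrix.toLin'_toMatrix']

variable {sys : LinSys m p} {φ : X ≃ₗ[ℝ] (Fin sys.n → ℝ)} {A : X →ₗ[ℝ] X}
  {B : (Fin m → ℝ) →ₗ[ℝ] X} {C : X →ₗ[ℝ] (Fin p → ℝ)} {D : (Fin m → ℝ) →ₗ[ℝ] (Fin p → ℝ)}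

lemma Represents.pow (h : Represents sys φ A B C D) (i : ℕ) (z : X) :
    (sys.A.toLin' ^ i) (φ z) = φ ((A ^ i) z) := by
  induction i generalizing z with
  | zero => simp
  | succ i ih => rw [pow_succ, pow_succ, Module.End.mul_apply, Module.End.mul_apply, h.hA, ih]

lemma Represents.obs (h : Represents sys φ A B C D) (k : ℕ)
    (ho : ∀ z, (∀ i < k, C ((A ^ i) z) = 0) → z = 0) :
    Observable sys ∧ lag sys ≤ k := by
  have ho' : ∀ z, (∀ i < k, sys.C.toLin' ((sys.A.toLin' ^ i) z) = 0) → z = 0 := by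
    intro z hz
    obtain ⟨z, rfl⟩ := φ.surjective z
    rw [ho z fun i hi => by rw [← h.hC, ← h.pow]; exact hz i hi, map_zero]
  refine ⟨observable_of_obs sys k ho', Nat.sInf_le ((obs_rank_succ_eq_iff sys k).2 ?_)⟩
  intro z hz
  rw [ho' z hz, map_zero, map_zero]

lemma Represents.explains (h : Represents sys φ A B C D) (t : ℕ) (u : ℕ → Fin m → ℝ)
    (y : ℕ → Fin p → ℝ) (x : ℕ → X)
    (hx : ∀ s < t, x (s + 1) = A (x s) + B (u s) ∧ y s = C (x s) + D (u s)) :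
    Explains sys t u y := by
  refine ⟨fun s => φ (x s), fun s hs => ?_⟩
  simp only [← Matrix.toLin'_apply]
  obtain ⟨h1, h2⟩ := hx s hs
  constructor
  · rw [h1, map_add, h.hA, h.hB]
  · rw [h2, h.hC, h.hD]

/-- Hautus test: if no complex left eigenvector of `A` annihilates `B`, the system is
controllable.  Complex row vectors are encoded as `ℝ`-linear maps `X → ℂ`. -/
lemma Represents.controllable [FiniteDimensional ℝ X] (h : Represents sys φ A B C D)
    (hc : ∀ (μ : ℂ) (w : X →ₗ[ℝ] ℂ), (∀ z, w (A z) = μ * w z) → (∀ a, w (B a) = 0) → w = 0) :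
    Controllable sys := by
  -- the space of complex covectors annihilating every `A^i B`
  let W : Submodule ℂ (X →ₗ[ℝ] ℂ) :=
    { carrier := {w | ∀ i a, w ((A ^ i) (B a)) = 0}
      add_mem' := fun {w w'} hw hw' i a => by simp [hw i a, hw' i a]
      zero_mem' := fun i a => rfl
      smul_mem' := fun c w hw i a => by simp [hw i a] }
  let T : (X →ₗ[ℝ] ℂ) →ₗ[ℂ] (X →ₗ[ℝ] ℂ) :=
    { toFun := fun w => w ∘ₗ A
      map_add' := fun w w' => rfl
      map_smul' := fun c w => rfl }
  have hT : ∀ w ∈ W, T w ∈ W := by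
    intro w hw i a
    have := hw (i + 1) a
    rwa [pow_succ', Module.End.mul_apply] at this
  have hfd : FiniteDimensional ℂ (X →ₗ[ℝ] ℂ) := FiniteDimensional.right ℝ ℂ _
  have hW : W = ⊥ := by
    by_contra hne
    have : Nontrivial W := Submodule.nontrivial_iff_ne_bot.2 hne
    obtain ⟨μ, hμ⟩ := Module.End.exists_eigenvalue (T.restrict hT)
    obtain ⟨⟨w, hw⟩, hev⟩ := hμ.exists_hasEigenvector
    have h1 := congrArg Subtype.val hev.apply_eq_smul
    have h2 : ∀ z, w (A z) = μ * w z := fun z => by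
      have := LinearMap.congr_fun h1 z
      exact (by simpa using this : (T w) z = μ * w z)
    exact hev.2 (Subtype.ext (hc μ w h2 fun a => by simpa using hw 0 a))
  rw [controllable_iff]
  intro w hw
  let w' : X →ₗ[ℝ] ℂ := Complex.ofRealCLM.toLinearMap ∘ₗ (dotProductBilin ℝ ℝ w) ∘ₗ
    φ.toLinearMap
  have hw' : ∀ z, w' z = ((w ⬝ᵥ φ z : ℝ) : ℂ) := fun z => rfl
  have hmem : w' ∈ W := by
    intro i a
    rw [hw', ← h.pow, ← h.hB, hw i a]
    simp
  rw [hW, Submodule.mem_bot] at hmem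
  refine dotProduct_eq_zero w fun z => ?_
  have := hw' (φ.symm z)
  rw [hmem] at this
  simpa [eq_comm] using this

end Realization

/-! ### Cascading the extra channel -/

section Stages

variable {m p : ℕ}

/-- Response of the output to an impulse entering through the channel `(b, v)`, i.e. of
`x(s+1) = A x(s) + b e(s)`, `y(s) = C x(s) + v e(s)`. -/
def impulse {X Y : Type} [AddCommGroup X] [Module ℝ X] [AddCommGroup Y] [Module ℝ Y]
    (A : X →ₗ[ℝ] X) (C : X →ₗ[ℝ] Y) (b : X) (v : Y) : ℕ → Y
  | 0 => v
  | i + 1 => C ((A ^ i) b)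

/-- A system on the state space `X` that explains the data and is observable from `k` output
samples, with an additional scalar input channel `(b, v)` that reaches the output after exactly
`k` steps. Its state trajectory on the data is annihilated by the relation
`ξ x(s) + ∑ j ≤ K, η j (u (s + j)) = 0`, as long as the window `[s, s + K]` lies in `[0, t - 1]`.
The last two fields are the Hautus-type conditions which make closing the loop
`e = ε (ξ x + ∑ j ≤ K, η j (σ^j u))` produce a controllable system for all but finitely many `ε`. -/
structure Stage (t : ℕ) (u : ℕ → Fin m → ℝ) (y : ℕ → Fin p → ℝ) (K : ℕ)
    (η : ℕ → (Fin m → ℝ) →ₗ[ℝ] ℝ) (k : ℕ) (X : Type) [AddCommGroup X] [Module ℝ X] where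
  A : X →ₗ[ℝ] X
  B : (Fin m → ℝ) →ₗ[ℝ] X
  C : X →ₗ[ℝ] (Fin p → ℝ)
  D : (Fin m → ℝ) →ₗ[ℝ] (Fin p → ℝ)
  b : X
  v : Fin p → ℝ
  ξ : X →ₗ[ℝ] ℝ
  x : ℕ → X
  expl : ∀ s < t, x (s + 1) = A (x s) + B (u s) ∧ y s = C (x s) + D (u s)
  ann : ∀ s, s + K < t → ξ (x s) + ∑ j ∈ Finset.range (K + 1), η j (u (s + j)) = 0
  obs : ∀ z, (∀ i < k, C ((A ^ i) z) = 0) → z = 0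
  imp_lt : ∀ i < k, impulse A C b v i = 0
  imp_eq : impulse A C b v k ≠ 0
  ctr : ∀ (μ : ℂ) (w : X →ₗ[ℝ] ℂ), (∀ z, w (A z) = μ * w z) → (∀ a, w (B a) = 0) →
    w b = 0 → w = 0
  fin : {q : ℂ × (X →ₗ[ℝ] ℂ) | (∀ z, q.2 (A z) + (ξ z : ℂ) = q.1 * q.2 z) ∧
    ∀ a, q.2 (B a) + ∑ j ∈ Finset.range (K + 1), q.1 ^ j * (η j a : ℂ) = 0}.Finite

variable {t : ℕ} {u : ℕ → Fin m → ℝ} {y : ℕ → Fin p → ℝ} {K : ℕ}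
  {η : ℕ → (Fin m → ℝ) →ₗ[ℝ] ℝ} {k : ℕ} {X : Type} [AddCommGroup X] [Module ℝ X]

/-- State map of the cascade of the channel `(b, v)` with the one-state filter `e⁺ = c e`. -/
def cascadeA (A : X →ₗ[ℝ] X) (b : X) (c : ℝ) : (X × ℝ) →ₗ[ℝ] (X × ℝ) where
  toFun z := (A z.1 + z.2 • b, c * z.2)
  map_add' z z' := by
    ext
    · simp only [Prod.fst_add, Prod.snd_add, map_add, add_smul]
      abel
    · simp [mul_add]
  map_smul' r z := by
    ext
    · simp [mul_smul]
    · simp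
      ring

/-- Output map of the same cascade. -/
def cascadeC {Y : Type} [AddCommGroup Y] [Module ℝ Y] (C : X →ₗ[ℝ] Y) (v : Y) :
    (X × ℝ) →ₗ[ℝ] Y where
  toFun z := C z.1 + z.2 • v
  map_add' z z' := by
    simp only [Prod.fst_add, Prod.snd_add, map_add, add_smul]
    abel
  map_smul' r z := by simp [mul_smul]

lemma cascade_output (S : Stage t u y K η k X) (c : ℝ) (i : ℕ) (hi : i ≤ k) (z : X) (e : ℝ) :
    cascadeC S.C S.v ((cascadeA S.A S.b c ^ i) (z, e)) =
      S.C ((S.A ^ i) z) + e • impulse S.A S.C S.b S.v i := by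
  induction i generalizing z e with
  | zero => rfl
  | succ i ih =>
    rw [pow_succ, Module.End.mul_apply]
    change cascadeC S.C S.v ((cascadeA S.A S.b c ^ i) (S.A z + e • S.b, c * e)) = _
    rw [ih (by omega), S.imp_lt i (by omega), smul_zero, add_zero, map_add, map_add, map_smul,
      map_smul, pow_succ, Module.End.mul_apply]
    rfl

/-- Prefixing the extra channel with a filter `e⁺ = c e + e'` adds one state and delays the channel
by one step. The pole `c` has to avoid the finitely many exceptional frequencies. -/
lemma Stage.step (S : Stage t u y K η k X) : Nonempty (Stage t u y K η (k + 1) (X × ℝ)) := by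
  obtain ⟨c, hc⟩ := (S.fin.image fun q => q.1.re).exists_notMem
  have himp : ∀ i ≤ k, impulse (cascadeA S.A S.b c) (cascadeC S.C S.v) (0, 1) 0 (i + 1) =
      impulse S.A S.C S.b S.v i := by
    intro i hi
    have := cascade_output S c i hi 0 1
    rw [map_zero, map_zero, zero_add, one_smul] at this
    exact this
  have hw1 : ∀ (w : X × ℝ →ₗ[ℝ] ℂ) (z : X) (e : ℝ), w (z, e) = w (z, 0) + e * w (0, 1) := by
    intro w z e
    have : ((z, e) : X × ℝ) = (z, 0) + e • (0, 1) := by simp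
    rw [this, map_add, map_smul, Complex.real_smul]
  have hA : ∀ z, cascadeA S.A S.b c z = (S.A z.1 + z.2 • S.b, c * z.2) := fun z => rfl
  refine ⟨{
    A := cascadeA S.A S.b c
    B := LinearMap.inl ℝ X ℝ ∘ₗ S.B
    C := cascadeC S.C S.v
    D := S.D
    b := (0, 1)
    v := 0
    ξ := S.ξ ∘ₗ LinearMap.fst ℝ X ℝ
    x := fun s => (S.x s, 0)
    expl := ?_, ann := ?_, obs := ?_, imp_lt := ?_, imp_eq := ?_, ctr := ?_, fin := ?_ }⟩
  · intro s hs
    obtain ⟨h1, h2⟩ := S.expl s hs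
    constructor
    · simp [hA, h1]
    · simp [cascadeC, h2]
  · intro s hs
    simpa using S.ann s hs
  · rintro ⟨z, e⟩ hz
    have hz' : ∀ i ≤ k, S.C ((S.A ^ i) z) + e • impulse S.A S.C S.b S.v i = 0 := fun i hi => by
      rw [← cascade_output S c i hi]
      exact hz i (by omega)
    have h0 : z = 0 := S.obs z fun i hi => by simpa [S.imp_lt i hi] using hz' i hi.le
    subst h0
    have := hz' k le_rfl
    simp only [map_zero, zero_add, smul_eq_zero, S.imp_eq, or_false] at this
    rw [this]
    rfl
  · intro i hi
    cases i with
    | zero => rfl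
    | succ i => rw [himp i (by omega), S.imp_lt i (by omega)]
  · rw [himp k le_rfl]
    exact S.imp_eq
  · intro μ w hwA hwB hwb
    have h0 : w ∘ₗ LinearMap.inl ℝ X ℝ = 0 := by
      refine S.ctr μ _ (fun z => ?_) (fun a => hwB a) ?_
      · have := hwA (z, 0)
        rw [hA, hw1] at this
        simpa using this
      · have := hwA (0, 1)
        rw [hA, hw1, hwb] at this
        simpa using this
    refine LinearMap.ext fun z => ?_
    have := LinearMap.congr_fun h0 z.1
    rw [← Prod.mk.eta (p := z), hw1, hwb]
    simpa using this
  · -- a solution for the cascade restricts to a solution for `S`, and is determined by it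
    refine Set.Finite.of_finite_image (f := fun q => (q.1, q.2 ∘ₗ LinearMap.inl ℝ X ℝ))
      (S.fin.subset ?_) ?_
    · rintro _ ⟨⟨μ, w⟩, ⟨h1, h2⟩, rfl⟩
      refine ⟨fun z => ?_, fun a => h2 a⟩
      have := h1 (z, 0)
      rw [hA] at this
      simpa using this
    · rintro ⟨μ, w⟩ ⟨h1, h2⟩ ⟨μ', w'⟩ ⟨h1', h2'⟩ heq
      simp only [Prod.mk.injEq] at heq
      obtain ⟨rfl, heq⟩ := heq
      have hμ : μ - c ≠ 0 := by
        intro h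
        refine hc ⟨(μ, w ∘ₗ LinearMap.inl ℝ X ℝ), ⟨fun z => ?_, fun a => h2 a⟩, ?_⟩
        · have := h1 (z, 0)
          rw [hA] at this
          simpa using this
        · rw [sub_eq_zero] at h
          simp [h]
      have e1 := h1 (0, 1)
      have e2 := h1' (0, 1)
      rw [hA, hw1] at e1 e2
      have e3 : w (S.b, 0) = w' (S.b, 0) := LinearMap.congr_fun heq S.b
      simp at e1 e2
      have e4 : (μ - c) * (w (0, 1) - w' (0, 1)) = 0 := by
        linear_combination e2 - e1 + e3
      have e5 : w (0, 1) = w' (0, 1) := by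
        rcases mul_eq_zero.1 e4 with h | h
        · exact absurd h hμ
        · exact sub_eq_zero.1 h
      refine Prod.ext rfl (LinearMap.ext fun z => ?_)
      change w z = w' z
      have e6 : w (z.1, 0) = w' (z.1, 0) := LinearMap.congr_fun heq z.1
      rw [← Prod.mk.eta (p := z), hw1, hw1 w', e5, e6]

lemma Stage.iterate [FiniteDimensional ℝ X] (S : Stage t u y K η k X) (d : ℕ) :
    ∃ (X' : Type) (_ : AddCommGroup X') (_ : Module ℝ X'), FiniteDimensional ℝ X' ∧
      Module.finrank ℝ X' = Module.finrank ℝ X + d ∧ Nonempty (Stage t u y K η (k + d) X') := by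
  induction d with
  | zero => exact ⟨X, _, _, inferInstance, rfl, ⟨S⟩⟩
  | succ d ih =>
    obtain ⟨X', i1, i2, i3, hd, ⟨S'⟩⟩ := ih
    refine ⟨X' × ℝ, _, _, inferInstance, ?_, S'.step⟩
    rw [Module.finrank_prod, hd, Module.finrank_self]
    rfl

end Stages

/-! ### Closing the loop -/

section ClosedLoop

variable {m p t K : ℕ} {u : ℕ → Fin m → ℝ} {y : ℕ → Fin p → ℝ}
  {η : ℕ → (Fin m → ℝ) →ₗ[ℝ] ℝ} {X : Type} [AddCommGroup X] [Module ℝ X]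

namespace Stage

/-- State map after closing the loop `e = ε (ξ x + ∑ j ≤ K, η j (σ^j u))`. -/
def clA (S : Stage t u y K η K X) (ε : ℝ) : X →ₗ[ℝ] X := S.A + ε • S.ξ.smulRight S.b

/-- Input map after closing the loop. The future inputs `σ^j u` are absorbed into the state; each
of them then enters through `A'^j b` with `A'` the closed-loop state map. -/
def clB (S : Stage t u y K η K X) (ε : ℝ) : (Fin m → ℝ) →ₗ[ℝ] X :=
  S.B + ε • ∑ j ∈ Finset.range (K + 1), (η j).smulRight ((S.clA ε ^ j) S.b)

/-- Feedthrough map after closing the loop. -/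
def clD (S : Stage t u y K η K X) (ε : ℝ) : (Fin m → ℝ) →ₗ[ℝ] (Fin p → ℝ) :=
  S.D + ε • (η K).smulRight (impulse S.A S.C S.b S.v K)

lemma clA_apply (S : Stage t u y K η K X) (ε : ℝ) (z : X) :
    S.clA ε z = S.A z + ε • S.ξ z • S.b := rfl

lemma clB_apply (S : Stage t u y K η K X) (ε : ℝ) (a : Fin m → ℝ) :
    S.clB ε a = S.B a + ε • ∑ j ∈ Finset.range (K + 1), η j a • (S.clA ε ^ j) S.b := by
  simp [clB]

/-- The first `K` blocks of the observability matrix do not notice the loop. -/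
lemma C_clA_pow (S : Stage t u y K η K X) (ε : ℝ) (i : ℕ) (hi : i < K) (z : X) :
    S.C ((S.clA ε ^ i) z) = S.C ((S.A ^ i) z) := by
  induction i generalizing z with
  | zero => rfl
  | succ i ih =>
    have h0 : S.C ((S.A ^ i) S.b) = 0 := S.imp_lt (i + 1) hi
    rw [pow_succ, Module.End.mul_apply, ih (by omega), clA_apply, map_add, map_add, map_smul,
      map_smul, map_smul, map_smul, h0, smul_zero, smul_zero, add_zero, pow_succ,
      Module.End.mul_apply]

/-- The closed loop explains the data for every gain. The loop signal is zero as long as the window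
`[s, s + K]` lies in the data, and what it does afterwards reaches the output too late. -/
lemma cl_explains (S : Stage t u y K η K X) (ε : ℝ) :
    ∃ x : ℕ → X, ∀ s < t, x (s + 1) = S.clA ε (x s) + S.clB ε (u s) ∧
      y s = S.C (x s) + S.clD ε (u s) := by
  -- `e` is the signal in the closed loop, `x'` the state driven by it
  let e : ℕ → X → ℝ := fun s z =>
    ε * (S.ξ z + ∑ j ∈ Finset.range (K + 1), η j (u (s + j)))
  let x' : ℕ → X := fun s =>
    Nat.rec (S.x 0) (fun s z => S.A z + S.B (u s) + e s z • S.b) s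
  have hx' : ∀ s, x' (s + 1) = S.A (x' s) + S.B (u s) + e s (x' s) • S.b := fun s => rfl
  have hsame : ∀ s, s + K ≤ t → x' s = S.x s := by
    intro s
    induction s with
    | zero => intro _; rfl
    | succ s ih =>
      intro hs
      have h1 := ih (by omega)
      have h2 : e s (x' s) = 0 := by
        simp only [e, h1, S.ann s (by omega), mul_zero]
      rw [hx', h2, h1, (S.expl s (by omega)).1, zero_smul, add_zero]
  have he0 : ∀ s, s + K < t → e s (x' s) = 0 := by
    intro s hs
    simp only [e, hsame s (by omega), S.ann s hs, mul_zero]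
  -- from time `t - K` on the loop is active, but it needs `K` steps to reach the output
  have hout : ∀ s i, s + i < t → S.C ((S.A ^ i) (x' s)) = S.C ((S.A ^ i) (S.x s)) := by
    intro s
    induction s with
    | zero => intro i _; rfl
    | succ s ih =>
      intro i hi
      have h1 := ih (i + 1) (by omega)
      have h2 : e s (x' s) • S.C ((S.A ^ i) S.b) = 0 := by
        rcases Nat.lt_or_ge (i + 1) K with h | h
        · have : S.C ((S.A ^ i) S.b) = 0 := S.imp_lt (i + 1) h
          rw [this, smul_zero]
        · rw [he0 s (by omega), zero_smul]
      rw [pow_succ, Module.End.mul_apply, Module.End.mul_apply] at h1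
      rw [hx', (S.expl s (by omega)).1]
      simp only [map_add, map_smul, h1, h2, add_zero]
  -- `ζ j` is the part of the state that absorbs the future input `σ^j u`
  let ζ : ℕ → ℕ → X := fun j s =>
    ∑ i ∈ Finset.range j, η j (u (s + (j - 1 - i))) • (S.clA ε ^ i) S.b
  have hζ : ∀ j s, ζ j (s + 1) + η j (u s) • (S.clA ε ^ j) S.b =
      S.clA ε (ζ j s) + η j (u (s + j)) • S.b := by
    intro j s
    have h1 : ζ j (s + 1) + η j (u s) • (S.clA ε ^ j) S.b =
        ∑ i ∈ Finset.range (j + 1), η j (u (s + (j - i))) • (S.clA ε ^ i) S.b := by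
      rw [Finset.sum_range_succ, Nat.sub_self, add_zero]
      congr 1
      refine Finset.sum_congr rfl fun i hi => ?_
      have := Finset.mem_range.1 hi
      rw [show s + 1 + (j - 1 - i) = s + (j - i) by omega]
    rw [h1, Finset.sum_range_succ', map_sum]
    congr 1
    refine Finset.sum_congr rfl fun i hi => ?_
    rw [map_smul, pow_succ', Module.End.mul_apply,
      show s + (j - 1 - i) = s + (j - (i + 1)) by omega]
  refine ⟨fun s => x' s - ε • ∑ j ∈ Finset.range (K + 1), ζ j s, fun s hs => ⟨?_, ?_⟩⟩
  · have hsum := Finset.sum_congr (rfl : Finset.range (K + 1) = _) fun j _ => hζ j s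
    rw [Finset.sum_add_distrib, Finset.sum_add_distrib] at hsum
    have h3 : ∑ j ∈ Finset.range (K + 1), ζ j (s + 1) =
        ∑ j ∈ Finset.range (K + 1), S.clA ε (ζ j s) +
        (∑ j ∈ Finset.range (K + 1), η j (u (s + j))) • S.b -
        ∑ j ∈ Finset.range (K + 1), η j (u s) • (S.clA ε ^ j) S.b := by
      rw [eq_sub_iff_add_eq, hsum, Finset.sum_smul]
    dsimp only
    rw [h3, map_sub, map_smul, map_sum, clB_apply, hx', clA_apply S ε (x' s)]
    simp only [e, smul_sub, smul_add, mul_add, add_smul, mul_smul]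
    abel
  · have h1 : y s = S.C (x' s) + S.D (u s) := by
      have := hout s 0 (by omega)
      simp only [pow_zero, Module.End.one_apply] at this
      rw [this]
      exact (S.expl s hs).2
    have h2 : (∑ j ∈ Finset.range (K + 1), S.C (ζ j s)) =
        η K (u s) • impulse S.A S.C S.b S.v K := by
      have hi : ∀ i < K, S.C ((S.clA ε ^ i) S.b) = impulse S.A S.C S.b S.v (i + 1) :=
        fun i hi => S.C_clA_pow ε i hi S.b
      rw [Finset.sum_range_succ, Finset.sum_eq_zero, zero_add]
      · rcases Nat.eq_zero_or_pos K with hK | hK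
        · -- without states the annihilating relation just says `η 0 (u s) = 0`
          subst hK
          have hx0 : S.x s = 0 := S.obs _ fun i hi => by omega
          have := S.ann s (by omega)
          rw [hx0] at this
          simp at this
          simp [ζ, this]
        · obtain ⟨K', hK'⟩ : ∃ K', K = K' + 1 := ⟨K - 1, by omega⟩
          simp only [ζ, map_sum, map_smul]
          rw [Finset.sum_eq_single K']
          · rw [hi K' (by omega), ← hK', show s + (K - 1 - K') = s by omega]
          · intro i hi1 hi2
            have := Finset.mem_range.1 hi1
            rw [hi i this, S.imp_lt (i + 1) (by omega), smul_zero]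
          · intro h
            simp at h
            omega
      · intro j hj
        have hj := Finset.mem_range.1 hj
        simp only [ζ, map_sum, map_smul]
        refine Finset.sum_eq_zero fun i hi' => ?_
        have := Finset.mem_range.1 hi'
        rw [hi i (by omega), S.imp_lt (i + 1) (by omega), smul_zero]
    dsimp only
    rw [map_sub, map_smul, map_sum, h2, h1, clD]
    simp

/-- For a suitable loop gain `ε ≠ 0` the closed loop passes the Hautus test. -/
lemma exists_gain (S : Stage t u y K η K X) : ∃ ε : ℝ, ε ≠ 0 ∧
    ∀ (μ : ℂ) (w : X →ₗ[ℝ] ℂ), (∀ z, w (S.clA ε z) = μ * w z) → (∀ a, w (S.clB ε a) = 0) →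
      w = 0 := by
  obtain ⟨ε, hε⟩ := ((S.fin.image fun q => (q.2 S.b)⁻¹.re).insert 0).exists_notMem
  rw [Set.mem_insert_iff, not_or] at hε
  obtain ⟨hε0, hε⟩ := hε
  refine ⟨ε, hε0, fun μ w h1 h2 => ?_⟩
  have hpow : ∀ j, w ((S.clA ε ^ j) S.b) = μ ^ j * w S.b := by
    intro j
    induction j with
    | zero => simp
    | succ j ih => rw [pow_succ', Module.End.mul_apply, h1, ih, pow_succ']; ring
  have h1' : ∀ z, w (S.A z) + ε * w S.b * S.ξ z = μ * w z := by
    intro z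
    rw [← h1, clA_apply, map_add, map_smul, map_smul, Complex.real_smul, Complex.real_smul]
    ring
  have h2' : ∀ a, w (S.B a) +
      ε * w S.b * ∑ j ∈ Finset.range (K + 1), μ ^ j * (η j a : ℂ) = 0 := by
    intro a
    rw [← h2 a, clB_apply, map_add, map_smul, map_sum, Complex.real_smul, mul_assoc,
      Finset.mul_sum]
    congr 2
    refine Finset.sum_congr rfl fun j _ => ?_
    rw [map_smul, Complex.real_smul, hpow]
    ring
  by_cases hb : w S.b = 0
  · exact S.ctr μ w (fun z => by simpa [hb] using h1' z) (fun a => by simpa [hb] using h2' a) hb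
  · exfalso
    -- normalising `w` gives one of the finitely many exceptional solutions
    have hf : (ε : ℂ) * w S.b ≠ 0 := mul_ne_zero (by exact_mod_cast hε0) hb
    refine hε ⟨(μ, ((ε : ℂ) * w S.b)⁻¹ • w), ⟨fun z => ?_, fun a => ?_⟩, ?_⟩
    · have := h1' z
      simp only [LinearMap.smul_apply, smul_eq_mul]
      linear_combination ((ε : ℂ) * w S.b)⁻¹ * this - (S.ξ z : ℂ) * inv_mul_cancel₀ hf
    · have := h2' a
      simp only [LinearMap.smul_apply, smul_eq_mul]
      linear_combination ((ε : ℂ) * w S.b)⁻¹ * this -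
        (∑ j ∈ Finset.range (K + 1), μ ^ j * (η j a : ℂ)) * inv_mul_cancel₀ hf
    · simp only [LinearMap.smul_apply, smul_eq_mul]
      have : ((ε : ℂ) * w S.b)⁻¹ * w S.b = (ε : ℂ)⁻¹ := by
        have : (ε : ℂ) ≠ 0 := by exact_mod_cast hε0
        field_simp
      rw [this, inv_inv, Complex.ofReal_re]

/-- Closing the loop yields a minimal system with lag at most `K` that explains the data. -/
lemma exists_minimal [FiniteDimensional ℝ X] (S : Stage t u y K η K X) :
    ∃ (ε : ℝ) (sys : LinSys m p) (φ : X ≃ₗ[ℝ] (Fin sys.n → ℝ)), ε ≠ 0 ∧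
      Represents sys φ (S.clA ε) (S.clB ε) S.C (S.clD ε) ∧
      MinimalSys sys ∧ lag sys ≤ K ∧ Explains sys t u y := by
  obtain ⟨ε, hε, hc⟩ := S.exists_gain
  obtain ⟨sys, φ, h⟩ := exists_represents (S.clA ε) (S.clB ε) S.C (S.clD ε)
  have ho := h.obs K fun z hz => S.obs z fun i hi => by
    rw [← S.C_clA_pow ε i hi]
    exact hz i hi
  obtain ⟨x, hx⟩ := S.cl_explains ε
  exact ⟨ε, sys, φ, hε, h, ⟨h.controllable hc, ho.1⟩, ho.2, h.explains t u y x hx⟩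

end Stage

end ClosedLoop

/-! ### Independence from informativity -/

section Independence

variable {m p : ℕ} {X : Type} [AddCommGroup X] [Module ℝ X]

/-- Finiteness of the exceptional frequencies for a controllable pair `(A, B)`. On solutions
`(μ, w)`, controllability makes each `w z` a polynomial in `μ`. If infinitely many `μ` occurred,
`w A + ξ = μ w` would be a polynomial identity; comparing degrees forces `w = 0`, hence `ξ = 0` and
`η = 0`. -/
lemma exceptional_finite [FiniteDimensional ℝ X] (A : X →ₗ[ℝ] X) (B : (Fin m → ℝ) →ₗ[ℝ] X)
    (hspan : ∀ S : Submodule ℝ X, (∀ a, B a ∈ S) → (∀ z ∈ S, A z ∈ S) → S = ⊤)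
    (hctr : ∀ (μ : ℂ) (w : X →ₗ[ℝ] ℂ), (∀ z, w (A z) = μ * w z) → (∀ a, w (B a) = 0) → w = 0)
    (K : ℕ) (ξ : X →ₗ[ℝ] ℝ) (η : ℕ → (Fin m → ℝ) →ₗ[ℝ] ℝ)
    (hne : ξ ≠ 0 ∨ ∃ j ≤ K, η j ≠ 0) :
    {q : ℂ × (X →ₗ[ℝ] ℂ) | (∀ z, q.2 (A z) + (ξ z : ℂ) = q.1 * q.2 z) ∧
      ∀ a, q.2 (B a) + ∑ j ∈ Finset.range (K + 1), q.1 ^ j * (η j a : ℂ) = 0}.Finite := by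
  set F := {q : ℂ × (X →ₗ[ℝ] ℂ) | (∀ z, q.2 (A z) + (ξ z : ℂ) = q.1 * q.2 z) ∧
      ∀ a, q.2 (B a) + ∑ j ∈ Finset.range (K + 1), q.1 ^ j * (η j a : ℂ) = 0} with hF
  have hinj : Set.InjOn Prod.fst F := by
    rintro ⟨μ, w⟩ ⟨h1, h2⟩ ⟨μ', w'⟩ ⟨h1', h2'⟩ heq
    dsimp only at h1 h2 h1' h2' heq
    subst heq
    refine Prod.ext rfl (sub_eq_zero.1 (hctr μ (w - w') (fun z => ?_) fun a => ?_))
    · simp only [LinearMap.sub_apply]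
      linear_combination h1 z - h1' z
    · simp only [LinearMap.sub_apply]
      linear_combination h2 a - h2' a
  refine Set.Finite.of_finite_image (f := Prod.fst) ?_ hinj
  by_contra hinf
  have hinf : (Prod.fst '' F).Infinite := hinf
  -- `T r`: states on which all solutions are given by one polynomial in `μ` of degree `< r`
  let T : ℕ → Submodule ℝ X := fun r =>
    { carrier := {z | ∃ P : Polynomial ℂ, P.degree < r ∧ ∀ q ∈ F, q.2 z = P.eval q.1}
      add_mem' := by
        rintro z z' ⟨P, hP, h⟩ ⟨P', hP', h'⟩
        refine ⟨P + P', lt_of_le_of_lt (Polynomial.degree_add_le _ _) (max_lt hP hP'), ?_⟩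
        intro q hq
        rw [map_add, h q hq, h' q hq, Polynomial.eval_add]
      zero_mem' := ⟨0, by simp, fun q _ => by simp⟩
      smul_mem' := by
        rintro c z ⟨P, hP, h⟩
        refine ⟨Polynomial.C (c : ℂ) * P, lt_of_le_of_lt ?_ hP, ?_⟩
        · rw [← Polynomial.smul_eq_C_mul]
          exact Polynomial.degree_smul_le _ _
        · intro q hq
          rw [map_smul, h q hq, Complex.real_smul, Polynomial.eval_mul, Polynomial.eval_C] }
  have hmono : Monotone T := by
    rintro r r' hr z ⟨P, hP, h⟩
    exact ⟨P, lt_of_lt_of_le hP (by exact_mod_cast hr), h⟩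
  have hTA : ∀ r, ∀ z ∈ T r, A z ∈ T (r + 1) := by
    rintro r z ⟨P, hP, h⟩
    refine ⟨Polynomial.X * P - Polynomial.C (ξ z : ℂ), ?_, ?_⟩
    · refine lt_of_le_of_lt (Polynomial.degree_sub_le _ _) (max_lt ?_ ?_)
      · rcases eq_or_ne P 0 with rfl | hP0
        · simp
        · rw [Polynomial.degree_mul, Polynomial.degree_X, Polynomial.degree_eq_natDegree hP0] at *
          rw [add_comm]
          exact_mod_cast Nat.succ_lt_succ (by exact_mod_cast hP)
      · refine lt_of_le_of_lt Polynomial.degree_C_le ?_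
        exact_mod_cast Nat.succ_pos r
    · intro q hq
      have h1 := hq.1 z
      rw [h q hq] at h1
      simp only [Polynomial.eval_sub, Polynomial.eval_mul, Polynomial.eval_X, Polynomial.eval_C]
      linear_combination h1
  have hTB : ∀ a, B a ∈ T (K + 1) := by
    intro a
    refine ⟨-∑ j ∈ Finset.range (K + 1), Polynomial.C (η j a : ℂ) * Polynomial.X ^ j, ?_, ?_⟩
    · rw [Polynomial.degree_neg]
      refine lt_of_le_of_lt (Polynomial.degree_sum_le _ _) ?_
      rw [Finset.sup_lt_iff (WithBot.bot_lt_coe _)]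
      intro j hj
      refine lt_of_le_of_lt (Polynomial.degree_C_mul_X_pow_le _ _) ?_
      exact_mod_cast Finset.mem_range.1 hj
    · intro q hq
      have := hq.2 a
      simp only [Polynomial.eval_neg, Polynomial.eval_finsetSum, Polynomial.eval_mul,
        Polynomial.eval_C, Polynomial.eval_pow, Polynomial.eval_X]
      rw [eq_neg_iff_add_eq_zero, ← this]
      congr 1
      exact Finset.sum_congr rfl fun j _ => mul_comm _ _
  have hTtop : ∃ r, T r = ⊤ := by
    obtain ⟨r, hr⟩ := monotone_stabilizes_iff_noetherian.2
      (inferInstance : IsNoetherian ℝ X) ⟨T, hmono⟩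
    have hr : ∀ r', r ≤ r' → T r = T r' := hr
    refine ⟨r, hspan _ (fun a => ?_) fun z hz => ?_⟩
    · rw [hr (max r (K + 1)) (le_max_left _ _)]
      exact hmono (le_max_right _ _) (hTB a)
    · rw [hr (r + 1) (Nat.le_succ r)]
      exact hTA r z hz
  -- degree comparison: the smallest such `r` is `0`
  have hdesc : ∀ r, T (r + 1) = ⊤ → T r = ⊤ := by
    intro r hr
    refine Submodule.eq_top_iff'.2 fun z => ?_
    obtain ⟨P, hP, h⟩ : z ∈ T (r + 1) := hr ▸ Submodule.mem_top
    obtain ⟨P', hP', h'⟩ : A z ∈ T (r + 1) := hr ▸ Submodule.mem_top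
    have heq : Polynomial.X * P = P' + Polynomial.C (ξ z : ℂ) := by
      refine Polynomial.eq_of_infinite_eval_eq _ _ (hinf.mono ?_)
      rintro _ ⟨q, hq, rfl⟩
      have h1 := hq.1 z
      rw [h q hq, h' q hq] at h1
      simp [h1]
    refine ⟨P, ?_, h⟩
    have hdeg : (Polynomial.X * P).degree < ((r + 1 : ℕ) : WithBot ℕ) := by
      rw [heq]
      refine lt_of_le_of_lt (Polynomial.degree_add_le _ _) (max_lt hP' ?_)
      refine lt_of_le_of_lt Polynomial.degree_C_le ?_
      exact_mod_cast Nat.succ_pos r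
    rcases eq_or_ne P 0 with rfl | hP0
    · simp
    · rw [Polynomial.degree_mul, Polynomial.degree_X, Polynomial.degree_eq_natDegree hP0] at hdeg
      rw [Polynomial.degree_eq_natDegree hP0]
      have : 1 + P.natDegree < r + 1 := by exact_mod_cast hdeg
      exact_mod_cast (by omega : P.natDegree < r)
  have hT0 : T 0 = ⊤ := by
    obtain ⟨r, hr⟩ := hTtop
    induction r with
    | zero => exact hr
    | succ r ih => exact ih (hdesc r hr)
  have hw0 : ∀ q ∈ F, ∀ z, q.2 z = 0 := by
    intro q hq z
    obtain ⟨P, hP, h⟩ : z ∈ T 0 := hT0 ▸ Submodule.mem_top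
    have : P = 0 := by
      rw [← Polynomial.degree_eq_bot]
      exact Nat.WithBot.lt_zero_iff.1 (by exact_mod_cast hP)
    rw [h q hq, this, Polynomial.eval_zero]
  rcases hne with hξ | ⟨j, hj, hηj⟩
  · obtain ⟨_, q, hq, rfl⟩ := hinf.nonempty
    refine hξ (LinearMap.ext fun z => ?_)
    have := hq.1 z
    rw [hw0 q hq, hw0 q hq] at this
    simpa using this
  · refine hηj (LinearMap.ext fun a => ?_)
    have : ∑ j ∈ Finset.range (K + 1), Polynomial.C (η j a : ℂ) * Polynomial.X ^ j = 0 := by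
      refine Polynomial.eq_of_infinite_eval_eq _ _ (hinf.mono ?_)
      rintro _ ⟨q, hq, rfl⟩
      have h2 := hq.2 a
      rw [hw0 q hq, zero_add] at h2
      simp only [Set.mem_ofPred_eq, Polynomial.eval_finsetSum, Polynomial.eval_mul,
        Polynomial.eval_C, Polynomial.eval_pow, Polynomial.eval_X, Polynomial.eval_zero]
      rw [← h2]
      exact Finset.sum_congr rfl fun j _ => mul_comm _ _
    have h3 := congrArg (fun P => Polynomial.coeff P j) this
    simp only [Polynomial.finsetSum_coeff, Polynomial.coeff_C_mul_X_pow, Polynomial.coeff_zero]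
      at h3
    rw [Finset.sum_ite_eq] at h3
    simpa [Nat.lt_succ_iff.2 hj] using h3

/-- A controllable system admits no proper `A`-invariant subspace containing the range of `B`. -/
lemma controllable_span (sys : LinSys m p) (hc : Controllable sys)
    (S : Submodule ℝ (Fin sys.n → ℝ)) (hB : ∀ a, sys.B.toLin' a ∈ S)
    (hA : ∀ z ∈ S, sys.A.toLin' z ∈ S) : S = ⊤ := by
  by_contra hne
  obtain ⟨f, hf, hle⟩ := Submodule.exists_le_ker_of_lt_top S (lt_top_iff_ne_top.2 hne)
  have hmem : ∀ i a, (sys.A.toLin' ^ i) (sys.B.toLin' a) ∈ S := by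
    intro i a
    induction i with
    | zero => exact hB a
    | succ i ih => rw [pow_succ', Module.End.mul_apply]; exact hA _ ih
  have hfd : ∀ z, (fun i => f (Pi.single i 1)) ⬝ᵥ z = f z := by
    intro z
    conv_rhs => rw [pi_eq_sum_univ' z, map_sum]
    refine Finset.sum_congr rfl fun i _ => ?_
    rw [map_smul, smul_eq_mul, mul_comm]
  have h0 := (controllable_iff sys).1 hc _ fun i a => by
    rw [hfd]
    exact hle (hmem i a)
  refine hf (LinearMap.ext fun z => ?_)
  rw [← hfd, h0, zero_dotProduct]
  rfl

/-- The true system, together with a nonzero annihilating relation, is the initial stage. The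
extra channel is a direction `b` which becomes visible at the output as late as possible; for lag
`0` there is no state and the channel is a feedthrough. -/
lemma exists_initial_stage (hp : 1 ≤ p) (sys : LinSys m p) (hmin : MinimalSys sys) (t : ℕ)
    (u : ℕ → Fin m → ℝ) (y : ℕ → Fin p → ℝ) (x : ℕ → Fin sys.n → ℝ)
    (hx : ExplainsWith sys t u y x) (K : ℕ) (ξ : (Fin sys.n → ℝ) →ₗ[ℝ] ℝ)
    (η : ℕ → (Fin m → ℝ) →ₗ[ℝ] ℝ) (hne : ξ ≠ 0 ∨ ∃ j ≤ K, η j ≠ 0)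
    (hann : ∀ s, s + K < t → ξ (x s) + ∑ j ∈ Finset.range (K + 1), η j (u (s + j)) = 0) :
    ∃ S : Stage t u y K η (lag sys) (Fin sys.n → ℝ), S.A = sys.A.toLin' ∧ S.B = sys.B.toLin' ∧
      S.C = sys.C.toLin' ∧ S.D = sys.D.toLin' ∧ S.ξ = ξ := by
  have hspan := controllable_span sys hmin.1
  have hctr : ∀ (μ : ℂ) (w : (Fin sys.n → ℝ) →ₗ[ℝ] ℂ),
      (∀ z, w (sys.A.toLin' z) = μ * w z) → (∀ a, w (sys.B.toLin' a) = 0) → w = 0 := by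
    intro μ w h1 h2
    have := hspan (LinearMap.ker w) h2 fun z hz => by
      rw [LinearMap.mem_ker] at hz ⊢
      rw [h1, hz, mul_zero]
    exact LinearMap.ker_eq_top.1 this
  obtain ⟨b, v, hlt, heq⟩ : ∃ (b : Fin sys.n → ℝ) (v : Fin p → ℝ),
      (∀ i < lag sys, impulse sys.A.toLin' sys.C.toLin' b v i = 0) ∧
        impulse sys.A.toLin' sys.C.toLin' b v (lag sys) ≠ 0 := by
    rcases Nat.eq_zero_or_eq_succ_pred (lag sys) with h | h
    · rw [h]
      refine ⟨0, fun _ => 1, fun i hi => by omega, fun h0 => ?_⟩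
      exact one_ne_zero (congrFun h0 ⟨0, hp⟩)
    · obtain ⟨b, hb1, hb2⟩ := exists_ker_below_lag sys _ h
      rw [h]
      refine ⟨b, 0, fun i hi => ?_, hb2⟩
      cases i with
      | zero => rfl
      | succ i => exact hb1 i (by omega)
  exact ⟨{
    A := sys.A.toLin', B := sys.B.toLin', C := sys.C.toLin', D := sys.D.toLin'
    b := b, v := v, ξ := ξ, x := x
    expl := hx
    ann := hann
    obs := obs_at_lag sys hmin.2
    imp_lt := hlt
    imp_eq := heq
    ctr := fun μ w h1 h2 _ => hctr μ w h1 h2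
    fin := exceptional_finite _ _ hspan hctr K ξ η hne }, rfl, rfl, rfl, rfl, rfl⟩

/-- Without additional states the loop genuinely changes the system: if the closed loop has the
same maps as the original system, the annihilating relation is trivial. -/
lemma Stage.relation_trivial {t K : ℕ} {u : ℕ → Fin m → ℝ} {y : ℕ → Fin p → ℝ}
    {η : ℕ → (Fin m → ℝ) →ₗ[ℝ] ℝ} (S : Stage t u y K η K X) (ε : ℝ) (hε : ε ≠ 0)
    (hA : S.clA ε = S.A) (hB : S.clB ε = S.B) (hD : S.clD ε = S.D) :
    S.ξ = 0 ∧ ∀ j ≤ K, η j = 0 := by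
  have hξ : S.ξ = 0 := by
    refine LinearMap.ext fun z => ?_
    have h1 := LinearMap.congr_fun hA z
    rw [S.clA_apply, add_eq_left, smul_eq_zero, smul_eq_zero] at h1
    rcases h1 with h | h | h
    · exact absurd h hε
    · exact h
    · rcases Nat.eq_zero_or_eq_succ_pred K with hK | hK
      · rw [S.obs z fun i hi => by omega, map_zero, map_zero]
      · refine absurd ?_ S.imp_eq
        have : ∀ i, impulse S.A S.C S.b S.v (i + 1) = 0 := by
          intro i
          simp [impulse, h]
        generalize hK' : impulse S.A S.C S.b S.v = g at *
        rw [hK]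
        exact this _
  refine ⟨hξ, ?_⟩
  have hsum : ∀ a, ∑ j ∈ Finset.range (K + 1), η j a • (S.A ^ j) S.b = 0 := by
    intro a
    have h1 := LinearMap.congr_fun hB a
    rw [S.clB_apply, add_eq_left, smul_eq_zero, hA] at h1
    exact h1.resolve_left hε
  -- descending induction: `η (K - i) = 0` for all `i ≤ K`
  have key : ∀ i ≤ K, η (K - i) = 0 := by
    intro i
    induction i using Nat.strong_induction_on with
    | _ i ih =>
      intro hi
      refine LinearMap.ext fun a => ?_
      cases i with
      | zero =>
        have h1 := LinearMap.congr_fun hD a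
        simp only [Stage.clD, LinearMap.add_apply, LinearMap.smul_apply,
          LinearMap.smulRight_apply, add_eq_left, smul_eq_zero, hε, S.imp_eq, false_or,
          or_false] at h1
        exact h1
      | succ i =>
        have h1 := congrArg (fun z => S.C ((S.A ^ i) z)) (hsum a)
        simp only [map_sum, map_smul, map_zero] at h1
        rw [Finset.sum_eq_single (K - (i + 1))] at h1
        · rw [← Module.End.mul_apply, ← pow_add] at h1
          have h2 : S.C ((S.A ^ (i + (K - (i + 1)))) S.b) ≠ 0 := by
            have := S.imp_eq
            obtain ⟨K', hK'⟩ : ∃ K', K' + 1 = K := ⟨K - 1, by omega⟩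
            rw [show i + (K - (i + 1)) = K' by omega]
            generalize hg : impulse S.A S.C S.b S.v = g at *
            rw [← hK', ← hg] at this
            exact this
          exact (smul_eq_zero.1 h1).resolve_right h2
        · intro j hj hjne
          have hj := Finset.mem_range.1 hj
          rcases Nat.lt_or_gt_of_ne hjne with h | h
          · have : S.C ((S.A ^ (i + j)) S.b) = 0 := S.imp_lt (i + j + 1) (by omega)
            rw [← Module.End.mul_apply, ← pow_add, this, smul_zero]
          · have := ih (K - j) (by omega) (by omega)
            rw [show K - (K - j) = j by omega] at this
            rw [this, LinearMap.zero_apply, zero_smul]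
        · intro h
          simp at h
  intro j hj
  have := key (K - j) (by omega)
  rwa [show K - (K - j) = j by omega] at this

/-- Informativity forces the stacked state/input Hankel data of depth `K = L^a` to have independent
rows. -/
lemma independent_of_informative (hp : 1 ≤ p) (t L N : ℕ) (u : ℕ → Fin m → ℝ)
    (y : ℕ → Fin p → ℝ) (sysT : LinSys m p) (hmin : MinimalSys sysT)
    (x : ℕ → Fin sysT.n → ℝ) (hx : ExplainsWith sysT t u y x)
    (hL : lag sysT ≤ L) (hN : sysT.n ≤ N) (hinf : Informative t u y sysT.n L N)
    (K : ℕ) (hK1 : lag sysT ≤ K) (hK2 : K ≤ L) (hK3 : K - lag sysT ≤ N - sysT.n)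
    (ξ : (Fin sysT.n → ℝ) →ₗ[ℝ] ℝ) (η : ℕ → (Fin m → ℝ) →ₗ[ℝ] ℝ)
    (hann : ∀ s, s + K < t → ξ (x s) + ∑ j ∈ Finset.range (K + 1), η j (u (s + j)) = 0) :
    ξ = 0 ∧ ∀ j ≤ K, η j = 0 := by
  by_contra hcon
  have hne : ξ ≠ 0 ∨ ∃ j ≤ K, η j ≠ 0 := by
    by_contra h
    push Not at h
    exact hcon h
  obtain ⟨S, hSA, hSB, hSC, hSD, hSξ⟩ :=
    exists_initial_stage hp sysT hmin t u y x hx K ξ η hne hann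
  rcases Nat.eq_or_lt_of_le hK1 with heq | hlt
  · subst heq
    obtain ⟨ε, sys, φ, hε, hrep, hsmin, hslag, hsex⟩ := S.exists_minimal
    have hn : sys.n = sysT.n := by
      have := φ.finrank_eq
      simpa [eq_comm] using this
    obtain ⟨hD, M, M', -, -, hMA, hMB, hMC⟩ :=
      hinf.2 sysT ⟨⟨⟨x, hx⟩, hmin⟩, hL, hN⟩ sys ⟨⟨hsex, hsmin⟩, hslag.trans hK2, by omega⟩
    -- the isomorphism is the identity because both systems have the same `C A^i` for `i < ℓ`
    have hM1 : ∀ z, M.toLin' (sysT.A.toLin' z) = sys.A.toLin' (M.toLin' z) := by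
      intro z
      rw [← LinearMap.comp_apply, ← LinearMap.comp_apply, ← Matrix.toLin'_mul,
        ← Matrix.toLin'_mul, hMA]
    have hM2 : ∀ a, M.toLin' (sysT.B.toLin' a) = sys.B.toLin' a := by
      intro a
      rw [← LinearMap.comp_apply, ← Matrix.toLin'_mul, hMB]
    have hM3 : ∀ z, sys.C.toLin' (M.toLin' z) = sysT.C.toLin' z := by
      intro z
      rw [← LinearMap.comp_apply, ← Matrix.toLin'_mul, hMC]
    have hMpow : ∀ i z, M.toLin' ((S.A ^ i) z) = (sys.A.toLin' ^ i) (M.toLin' z) := by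
      intro i
      induction i with
      | zero => intro z; rfl
      | succ i ih =>
        intro z
        rw [pow_succ, pow_succ, Module.End.mul_apply, Module.End.mul_apply, ih, hSA, hM1]
    have hid : ∀ z, M.toLin' z = φ z := by
      intro z
      rw [← φ.apply_symm_apply (M.toLin' z)]
      congr 1
      rw [← sub_eq_zero]
      refine S.obs _ fun i hi => ?_
      rw [map_sub, map_sub, sub_eq_zero, ← S.C_clA_pow ε i hi, ← hrep.hC, ← hrep.pow,
        φ.apply_symm_apply, ← hMpow, hM3, hSC]
    have := S.relation_trivial ε hε
      (LinearMap.ext fun z => φ.injective (by rw [← hrep.hA, ← hid, ← hid, hSA, hM1]))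
      (LinearMap.ext fun a => φ.injective (by rw [← hrep.hB, ← hid, hSB, hM2]))
      (LinearMap.ext fun a => by rw [← hrep.hD, hSD, hD])
    rw [hSξ] at this
    exact hcon this
  · obtain ⟨X', i1, i2, i3, hfr, ⟨S'⟩⟩ := S.iterate (K - lag sysT)
    rw [show lag sysT + (K - lag sysT) = K by omega] at S'
    obtain ⟨ε, sys, φ, hε, hrep, hsmin, hslag, hsex⟩ := S'.exists_minimal
    have hn : sys.n = sysT.n + (K - lag sysT) := by
      have := φ.finrank_eq
      rw [hfr] at this
      simpa [eq_comm] using this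
    have hmem : sys ∈ ExplSet t u y ∩ Mset m p ∩ SLN m p L N :=
      ⟨⟨hsex, hsmin⟩, hslag.trans hK2, by omega⟩
    rw [hinf.1] at hmem
    have : sys.n = sysT.n := hmem.1.1.2
    omega

end Independence

/-! ### Consequences of independence -/

section Consequences

variable {m p : ℕ}

/-- Simulation over a window: future states are linear in the present state and the inputs. -/
lemma state_predict (sys : LinSys m p) (t : ℕ) (u : ℕ → Fin m → ℝ) (y : ℕ → Fin p → ℝ)
    (x : ℕ → Fin sys.n → ℝ) (hx : ExplainsWith sys t u y x) (K i : ℕ) (hi : i ≤ K) :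
    ∃ H : ℕ → (Fin m → ℝ) →ₗ[ℝ] (Fin sys.n → ℝ), ∀ s, s + i ≤ t →
      x (s + i) = (sys.A.toLin' ^ i) (x s) + ∑ j ∈ Finset.range (K + 1), H j (u (s + j)) := by
  induction i with
  | zero => exact ⟨fun _ => 0, fun s _ => by simp⟩
  | succ i ih =>
    obtain ⟨H, hH⟩ := ih (by omega)
    refine ⟨fun j => sys.A.toLin' ∘ₗ H j + if j = i then sys.B.toLin' else 0, fun s hs => ?_⟩
    have hB : ∑ j ∈ Finset.range (K + 1),
        (if j = i then sys.B.toLin' else 0 : (Fin m → ℝ) →ₗ[ℝ] (Fin sys.n → ℝ)) (u (s + j)) =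
        sys.B.toLin' (u (s + i)) := by
      rw [Finset.sum_eq_single i]
      · simp
      · intro j _ hj
        simp [hj]
      · intro h
        simp at h
        omega
    have h1 := (hx (s + i) (by omega)).1
    rw [← Matrix.toLin'_apply, ← Matrix.toLin'_apply, hH s (by omega)] at h1
    simp only [LinearMap.add_apply, LinearMap.comp_apply, Finset.sum_add_distrib, hB]
    rw [← add_assoc s i 1, h1, map_add, map_sum, pow_succ', Module.End.mul_apply, add_assoc]

lemma output_predict (sys : LinSys m p) (t : ℕ) (u : ℕ → Fin m → ℝ) (y : ℕ → Fin p → ℝ)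
    (x : ℕ → Fin sys.n → ℝ) (hx : ExplainsWith sys t u y x) (K i : ℕ) (hi : i ≤ K) :
    ∃ G : ℕ → (Fin m → ℝ) →ₗ[ℝ] (Fin p → ℝ), ∀ s, s + i < t →
      y (s + i) = sys.C.toLin' ((sys.A.toLin' ^ i) (x s)) +
        ∑ j ∈ Finset.range (K + 1), G j (u (s + j)) := by
  obtain ⟨H, hH⟩ := state_predict sys t u y x hx K i hi
  refine ⟨fun j => sys.C.toLin' ∘ₗ H j + if j = i then sys.D.toLin' else 0, fun s hs => ?_⟩
  have hD : ∑ j ∈ Finset.range (K + 1),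
      (if j = i then sys.D.toLin' else 0 : (Fin m → ℝ) →ₗ[ℝ] (Fin p → ℝ)) (u (s + j)) =
      sys.D.toLin' (u (s + i)) := by
    rw [Finset.sum_eq_single i]
    · simp
    · intro j _ hj
      simp [hj]
    · intro h
      simp at h
      omega
  have h1 := (hx (s + i) hs).2
  rw [← Matrix.toLin'_apply, ← Matrix.toLin'_apply, hH s (by omega)] at h1
  simp only [LinearMap.add_apply, LinearMap.comp_apply, Finset.sum_add_distrib, hD]
  rw [h1, map_add, map_sum, add_assoc]

/-- The observability map with `k` blocks. -/
def obsLin (sys : LinSys m p) (k : ℕ) : (Fin sys.n → ℝ) →ₗ[ℝ] (Fin k → Fin p → ℝ) :=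
  LinearMap.pi fun i => sys.C.toLin' ∘ₗ (sys.A.toLin' ^ (i : ℕ))

variable {t K : ℕ} {u : ℕ → Fin m → ℝ} {y : ℕ → Fin p → ℝ} {sysT : LinSys m p}
  {x : ℕ → Fin sysT.n → ℝ}

/-- Two explaining systems predict the same outputs, so their observability maps agree on the
data up to terms in the inputs. -/
lemma obs_compare (hx : ExplainsWith sysT t u y x) (sys : LinSys m p)
    (x' : ℕ → Fin sys.n → ℝ) (hx' : ExplainsWith sys t u y x') :
    ∃ G : ℕ → ℕ → (Fin m → ℝ) →ₗ[ℝ] (Fin p → ℝ), ∀ i ≤ K, ∀ s, s + K < t →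
      sysT.C.toLin' ((sysT.A.toLin' ^ i) (x s)) =
        sys.C.toLin' ((sys.A.toLin' ^ i) (x' s)) +
          ∑ j ∈ Finset.range (K + 1), G i j (u (s + j)) := by
  have h1 : ∀ i, ∃ G : ℕ → (Fin m → ℝ) →ₗ[ℝ] (Fin p → ℝ), i ≤ K → ∀ s, s + K < t →
      sysT.C.toLin' ((sysT.A.toLin' ^ i) (x s)) =
        sys.C.toLin' ((sys.A.toLin' ^ i) (x' s)) +
          ∑ j ∈ Finset.range (K + 1), G j (u (s + j)) := by
    intro i
    by_cases hi : i ≤ K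
    · obtain ⟨G₁, h₁⟩ := output_predict sysT t u y x hx K i hi
      obtain ⟨G₂, h₂⟩ := output_predict sys t u y x' hx' K i hi
      refine ⟨fun j => G₂ j - G₁ j, fun _ s hs => ?_⟩
      have e₁ := h₁ s (by omega)
      rw [h₂ s (by omega)] at e₁
      simp only [LinearMap.sub_apply, Finset.sum_sub_distrib]
      rw [← add_sub_assoc, e₁, add_sub_cancel_right]
    · exact ⟨fun _ => 0, fun h => absurd h hi⟩
  choose G hG using h1
  exact ⟨G, hG⟩

/-- The true state is a function of the state of any other explaining system and of the inputs in a
window. With fewer states in the other system, a nonzero functional of the true state would be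
determined by the inputs alone, contradicting independence. -/
lemma states_le (hobs : Observable sysT) (hK : lag sysT ≤ K)
    (hx : ExplainsWith sysT t u y x)
    (hind : ∀ (ξ : (Fin sysT.n → ℝ) →ₗ[ℝ] ℝ) (η : ℕ → (Fin m → ℝ) →ₗ[ℝ] ℝ),
      (∀ s, s + K < t → ξ (x s) + ∑ j ∈ Finset.range (K + 1), η j (u (s + j)) = 0) →
      ξ = 0 ∧ ∀ j ≤ K, η j = 0)
    (sys : LinSys m p) (hex : Explains sys t u y) : sysT.n ≤ sys.n := by
  obtain ⟨x', hx'⟩ := hex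
  obtain ⟨G, hG⟩ := obs_compare (K := K) hx sys x' hx'
  have hker : LinearMap.ker (obsLin sysT (K + 1)) = ⊥ := by
    refine LinearMap.ker_eq_bot'.2 fun z hz => obs_at_lag sysT hobs z fun i hi => ?_
    exact congrFun hz ⟨i, by omega⟩
  obtain ⟨R, hR⟩ := (obsLin sysT (K + 1)).exists_leftInverse_of_injective hker
  -- `x(s)` is a linear function of `x'(s)` and the inputs in the window
  have hstate : ∀ s, s + K < t → x s = (R ∘ₗ obsLin sys (K + 1)) (x' s) +
      ∑ j ∈ Finset.range (K + 1), R (fun i => G i j (u (s + j))) := by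
    intro s hs
    have h1 : obsLin sysT (K + 1) (x s) = obsLin sys (K + 1) (x' s) +
        ∑ j ∈ Finset.range (K + 1), fun i : Fin (K + 1) => G i j (u (s + j)) := by
      funext i
      rw [Pi.add_apply, Finset.sum_apply]
      exact hG i (by omega) s hs
    have h2 := LinearMap.congr_fun hR (x s)
    rw [LinearMap.comp_apply, h1, map_add, map_sum] at h2
    exact h2.symm
  by_contra hlt
  have hrange : LinearMap.range (R ∘ₗ obsLin sys (K + 1)) < ⊤ := by
    refine lt_top_iff_ne_top.2 fun htop => ?_
    have := LinearMap.finrank_range_le (R ∘ₗ obsLin sys (K + 1))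
    rw [htop, finrank_top] at this
    simp at this
    omega
  obtain ⟨ξ, hξ, hle⟩ := Submodule.exists_le_ker_of_lt_top _ hrange
  refine hξ (hind ξ (fun j => -(ξ ∘ₗ R ∘ₗ LinearMap.pi fun i : Fin (K + 1) => G i j)) ?_).1
  intro s hs
  have h0 : ξ ((R ∘ₗ obsLin sys (K + 1)) (x' s)) = 0 := hle ⟨x' s, rfl⟩
  rw [hstate s hs, map_add, h0, zero_add, map_sum, ← Finset.sum_add_distrib]
  refine Finset.sum_eq_zero fun j _ => ?_
  exact add_neg_cancel _

/-- The recursion among the observability blocks of an explaining system with lag `ℓ'` transfers to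
the true system, because the discrepancy is a relation between state and inputs. -/
lemma lag_le (hK : lag sysT ≤ K) (hx : ExplainsWith sysT t u y x)
    (hind : ∀ (ξ : (Fin sysT.n → ℝ) →ₗ[ℝ] ℝ) (η : ℕ → (Fin m → ℝ) →ₗ[ℝ] ℝ),
      (∀ s, s + K < t → ξ (x s) + ∑ j ∈ Finset.range (K + 1), η j (u (s + j)) = 0) →
      ξ = 0 ∧ ∀ j ≤ K, η j = 0)
    (sys : LinSys m p) (hex : Explains sys t u y) : lag sysT ≤ lag sys := by
  obtain ⟨x', hx'⟩ := hex
  obtain ⟨G, hG⟩ := obs_compare (K := K) hx sys x' hx'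
  by_contra hlt
  -- at its lag, the next block of `sys` is a linear combination of the previous ones
  obtain ⟨R, hR⟩ : ∃ R : (Fin (lag sys) → Fin p → ℝ) →ₗ[ℝ] (Fin p → ℝ),
      ∀ z, R (obsLin sys (lag sys) z) = sys.C.toLin' ((sys.A.toLin' ^ lag sys) z) := by
    have hker : LinearMap.ker (obsLin sys (lag sys)) ≤
        LinearMap.ker (sys.C.toLin' ∘ₗ (sys.A.toLin' ^ lag sys)) := by
      intro z hz
      exact (obs_rank_succ_eq_iff sys _).1 (lag_spec sys) z fun i hi => congrFun hz ⟨i, hi⟩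
    obtain ⟨R, hR⟩ := LinearMap.exists_extend
      ((LinearMap.ker (obsLin sys (lag sys))).liftQ _ hker ∘ₗ
        (obsLin sys (lag sys)).quotKerEquivRange.symm.toLinearMap)
    refine ⟨R, fun z => ?_⟩
    have h1 := LinearMap.congr_fun hR ⟨obsLin sys (lag sys) z, ⟨z, rfl⟩⟩
    rw [LinearMap.comp_apply, LinearMap.comp_apply] at h1
    rw [Submodule.subtype_apply] at h1
    rw [h1]
    have h2 : (obsLin sys (lag sys)).quotKerEquivRange.symm
        ⟨obsLin sys (lag sys) z, ⟨z, rfl⟩⟩ = Submodule.Quotient.mk z :=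
      (LinearEquiv.symm_apply_eq _).2 rfl
    erw [h2]
    rfl
  have hrec : ∀ z, sysT.C.toLin' ((sysT.A.toLin' ^ lag sys) z) =
      R (obsLin sysT (lag sys) z) := by
    intro z
    funext q
    have h0 := (hind
      (LinearMap.proj q ∘ₗ (sysT.C.toLin' ∘ₗ (sysT.A.toLin' ^ lag sys) -
        R ∘ₗ obsLin sysT (lag sys)))
      (fun j => LinearMap.proj q ∘ₗ (R ∘ₗ (LinearMap.pi fun i : Fin (lag sys) => G i j) -
        G (lag sys) j)) ?_).1
    · have := LinearMap.congr_fun h0 z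
      simpa [sub_eq_zero] using this
    · intro s hs
      have h1 : obsLin sysT (lag sys) (x s) = obsLin sys (lag sys) (x' s) +
          ∑ j ∈ Finset.range (K + 1),
            (LinearMap.pi fun i : Fin (lag sys) => G i j) (u (s + j)) := by
        funext i
        rw [Pi.add_apply, Finset.sum_apply]
        exact hG i (by omega) s hs
      have h2 := hG (lag sys) (by omega) s hs
      simp only [LinearMap.comp_apply, LinearMap.sub_apply, LinearMap.proj_apply]
      rw [h1, h2, map_add, map_sum, hR, ← Finset.sum_apply, ← Pi.add_apply,
        Finset.sum_sub_distrib, add_sub_add_left_eq_sub, sub_add_sub_cancel, sub_self,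
        Pi.zero_apply]
  refine hlt (Nat.sInf_le ((obs_rank_succ_eq_iff sysT _).2 fun z hz => ?_))
  have h0 : obsLin sysT (lag sys) z = 0 := funext fun i => hz i i.2
  rw [hrec, h0, map_zero]

/-- Independent rows need at least as many columns. -/
lemma length_le (hind : ∀ (ξ : (Fin sysT.n → ℝ) →ₗ[ℝ] ℝ) (η : ℕ → (Fin m → ℝ) →ₗ[ℝ] ℝ),
      (∀ s, s + K < t → ξ (x s) + ∑ j ∈ Finset.range (K + 1), η j (u (s + j)) = 0) →
      ξ = 0 ∧ ∀ j ≤ K, η j = 0) :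
    sysT.n + (K + 1) * m ≤ t - K := by
  let Ψ : ((Fin sysT.n → ℝ) × (Fin (K + 1) × Fin m → ℝ)) →ₗ[ℝ] (Fin (t - K) → ℝ) :=
    { toFun := fun q s => q.1 ⬝ᵥ x s +
        ∑ j : Fin (K + 1), (fun c => q.2 (j, c)) ⬝ᵥ u (s + j)
      map_add' := by
        intro q q'
        funext s
        simp only [Prod.fst_add, Prod.snd_add, Pi.add_apply, dotProduct, add_mul,
          Finset.sum_add_distrib]
        ring
      map_smul' := by
        intro c q
        funext s
        simp only [Prod.smul_fst, Prod.smul_snd, Pi.smul_apply, smul_eq_mul,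
          dotProduct, Finset.mul_sum, mul_add, RingHom.id_apply, mul_assoc] }
  have hinj : Function.Injective Ψ := by
    rw [← LinearMap.ker_eq_bot]
    refine LinearMap.ker_eq_bot'.2 fun q hq => ?_
    obtain ⟨h1, h2⟩ := hind (dotProductBilin ℝ ℝ q.1)
      (fun j => if hj : j < K + 1 then dotProductBilin ℝ ℝ (fun c => q.2 (⟨j, hj⟩, c)) else 0) (by
        intro s hs
        have h := congrFun hq ⟨s, by omega⟩
        rw [Finset.sum_range]
        simp only [Fin.is_lt, dite_true]
        exact h)
    refine Prod.ext ?_ ?_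
    · exact dotProduct_eq_zero _ fun z => LinearMap.congr_fun h1 z
    · funext r
      have h3 := h2 r.1 (by omega)
      rw [dif_pos r.1.2] at h3
      exact congrFun (dotProduct_eq_zero _ fun z => LinearMap.congr_fun h3 z) r.2
  have := LinearMap.finrank_le_finrank_of_injective hinj
  simpa using this

end Consequences

/-! ### Minimum length of informative experiments -/

/-- **Minimum length of informative experiments.** If the data (generated by a
minimal true system with `ℓ_true ≤ L`, `n_true ≤ N`) are informative for
system identification, then `ℓ_min,t = ℓ_true`, `n_min,t = n_true`, and
`t ≥ T = L^a + (L^a + 1)m + n_true` with `L^a = min(L, N - n_true + ℓ_true)`. -/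
theorem informative_min_length {m p : ℕ} (hm : 1 ≤ m) (hp : 1 ≤ p)
    (t L N : ℕ) (u : ℕ → Fin m → ℝ) (y : ℕ → Fin p → ℝ)
    (hu : ∃ s < t, u s ≠ 0)
    (sysT : LinSys m p) (hmin : MinimalSys sysT) (hdata : Explains sysT t u y)
    (hL : lag sysT ≤ L) (hN : sysT.n ≤ N)
    (hinf : Informative t u y sysT.n L N) :
    lMin t u y = lag sysT ∧ nMin t u y = sysT.n ∧
      min L (N - sysT.n + lag sysT) +
        (min L (N - sysT.n + lag sysT) + 1) * m + sysT.n ≤ t := by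
  obtain ⟨x, hx⟩ := hdata
  set K := min L (N - sysT.n + lag sysT) with hKdef
  have hK1 : lag sysT ≤ K := by omega
  have hind := independent_of_informative hp t L N u y sysT hmin x hx hL hN hinf K hK1
    (by omega) (by omega)
  refine ⟨le_antisymm (Nat.sInf_le ⟨sysT, ⟨x, hx⟩, rfl⟩) ?_,
    le_antisymm (Nat.sInf_le ⟨sysT, ⟨x, hx⟩, rfl⟩) ?_, ?_⟩
  · refine le_csInf ⟨_, sysT, ⟨x, hx⟩, rfl⟩ ?_
    rintro _ ⟨sys, hex, rfl⟩
    exact lag_le hK1 hx hind sys hex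
  · refine le_csInf ⟨_, sysT, ⟨x, hx⟩, rfl⟩ ?_
    rintro _ ⟨sys, hex, rfl⟩
    exact states_le hmin.2 hK1 hx hind sys hex
  · have h1 := length_le hind
    -- `m ≥ 1` makes the left side positive, so the truncated `t - K` is a true difference
    have h2 : 1 ≤ (K + 1) * m := Nat.mul_pos (Nat.succ_pos K) hm
    omega
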